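/- arXiv:1610.05137 — 2 statements merged into one kernel-verified Lean document; each statement's English description precedes it below -/
import Mathlib

section
/- Let L be a finite join-semidistributive lattice. Then the canonical join complex of L is flag if and only if L is semidistributive (that is, L is also meet-semidistributive). -/
universe u v

def JoinSemidistrib (α : Type*) [Lattice α] : Prop :=
  ∀ x y z : α, x ⊔ y = x ⊔ z → x ⊔ (y ⊓ z) = x ⊔ y

def MeetSemidistrib (α : Type*) [Lattice α] : Prop :=
  ∀ x y z : α, x ⊓ y = x ⊓ z → x ⊓ (y ⊔ z) = x ⊓ y

section JoinDefs

variable {α : Type*} [Lattice α] [OrderBot α]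

/-- `j` is join-irreducible: not the bottom element, and `j = a ⊔ b` implies `j = a` or `j = b`. -/
def JoinIrred (j : α) : Prop :=
  j ≠ ⊥ ∧ ∀ a b : α, j = a ⊔ b → j = a ∨ j = b

/-- `A` join-refines `B`: every element of `A` is below some element of `B`. -/
def JoinRefines (A B : Finset α) : Prop :=
  ∀ a ∈ A, ∃ b ∈ B, a ≤ b

/-- `A` is an irredundant join representation of `w`. -/
def IrredJoinRep (A : Finset α) (w : α) : Prop :=
  A.sup id = w ∧ ∀ A' ⊂ A, A'.sup id < w

/-- `A` is the canonical join representation of `w`: the irredundant join representation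
of `w` that join-refines every irredundant join representation of `w`. -/
def CanonicalJoinRep (A : Finset α) (w : α) : Prop :=
  IrredJoinRep A w ∧ ∀ B : Finset α, IrredJoinRep B w → JoinRefines A B

/-- `A` joins canonically, i.e. `A` is a face of the canonical join complex. -/
def JoinsCanonically (A : Finset α) : Prop :=
  CanonicalJoinRep A (A.sup id)

/-- `j` is a canonical joinand of `w`. -/
def CanonicalJoinand (j w : α) : Prop :=
  ∃ A : Finset α, CanonicalJoinRep A w ∧ j ∈ A

end JoinDefs

/-- The canonical join complex is flag: any finite set of join-irreducible elements all of
whose two-element subsets are faces is itself a face. -/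
def FlagCanonicalJoinComplex (α : Type*) [Lattice α] [OrderBot α] [DecidableEq α] : Prop :=
  ∀ F : Finset α, (∀ j ∈ F, JoinIrred j) →
    (∀ j ∈ F, ∀ j' ∈ F, j ≠ j' → JoinsCanonically ({j, j'} : Finset α)) →
    JoinsCanonically F

/-- A lattice is crosscut-simplicial if for every `x ≤ y` and every proper subset `S` of the
set of atoms of the interval `[x, y]` (elements `a` with `x ⋖ a` and `a ≤ y`), the join of `x`
with all elements of `S` is strictly less than `y`. -/
def CrosscutSimplicial (β : Type*) [Lattice β] : Prop :=
  ∀ x y : β, x ≤ y → ∀ S : Finset β,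
    (∀ a ∈ S, x ⋖ a ∧ a ≤ y) →
    (∃ a : β, (x ⋖ a ∧ a ≤ y) ∧ a ∉ S) →
    S.fold (· ⊔ · : β → β → β) x id < y

section MeetDefs

variable {α : Type*} [Lattice α] [OrderTop α]

/-- `m` is meet-irreducible: not the top element, and `m = a ⊓ b` implies `m = a` or `m = b`. -/
def MeetIrred (m : α) : Prop :=
  m ≠ ⊤ ∧ ∀ a b : α, m = a ⊓ b → m = a ∨ m = b

/-- `A` meet-refines `B`: every element of `A` is above some element of `B`. -/
def MeetRefines (A B : Finset α) : Prop :=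
  ∀ a ∈ A, ∃ b ∈ B, b ≤ a

/-- `A` is an irredundant meet representation of `w`. -/
def IrredMeetRep (A : Finset α) (w : α) : Prop :=
  A.inf id = w ∧ ∀ A' ⊂ A, w < A'.inf id

/-- `A` is the canonical meet representation of `w`. -/
def CanonicalMeetRep (A : Finset α) (w : α) : Prop :=
  IrredMeetRep A w ∧ ∀ B : Finset α, IrredMeetRep B w → MeetRefines A B

/-- `A` meets canonically, i.e. `A` is a face of the canonical meet complex. -/
def MeetsCanonically (A : Finset α) : Prop :=
  CanonicalMeetRep A (A.inf id)

end MeetDefs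

/-- The canonical meet complex is flag. -/
def FlagCanonicalMeetComplex (α : Type*) [Lattice α] [OrderTop α] [DecidableEq α] : Prop :=
  ∀ F : Finset α, (∀ m ∈ F, MeetIrred m) →
    (∀ m ∈ F, ∀ m' ∈ F, m ≠ m' → MeetsCanonically ({m, m'} : Finset α)) →
    MeetsCanonically F

/-!
Write `j_*` for the join of the elements strictly below `j`. Both sides of the equivalence are
conditions on inequalities `j ≤ j_* ⊔ x`.

In a finite join-semidistributive lattice, `F` joins canonically iff `j ≰ j_* ⊔ ⋁ (F \ {j})` for
every `j ∈ F`, since two join representations `A` and `B` of the same element are both refined by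
the representation `{a ⊓ b}`. A finite lattice is meet-semidistributive iff each `j` is join-prime
above `j_*`: if `j_* ≤ y`, `j_* ≤ z` and `j ≤ y ⊔ z`, then `j ≤ y` or `j ≤ z`. Under this
condition `j ≰ j_* ⊔ ⋁ (F \ {j})` can be tested one `k ∈ F` at a time, which is flagness.

Conversely, let `j_* ≤ y`, `j_* ≤ z`, `j ≤ y ⊔ z`, `j ≰ y` and `j ≰ z`, and let `D` be the
canonical join representation of `y ⊔ z`. It refines `{y, z}`, so `j ≰ j_* ⊔ d` for every `d ∈ D`.
Hence `j` is compatible with every `d ∈ D` not below `j`, but not with all of them together: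
those, along with `j_*`, join to an element above `j`.
-/

namespace JoinSemidistrib

open scoped FinsetFamily

variable {α ι κ : Type*} [Lattice α] [OrderBot α]

lemma sup_finset_sup_inf_eq (hα : JoinSemidistrib α) {x y : α} {t : Finset κ} {g : κ → α}
    (h : x ⊔ y = x ⊔ t.sup g) : x ⊔ t.sup (y ⊓ g ·) = x ⊔ y := by
  induction t using Finset.cons_induction generalizing x with
  | empty => simpa using h.symm
  | cons k t _ ih =>
    simp only [Finset.sup_cons] at h ⊢
    have hk : g k ≤ x ⊔ y := h ▸ le_sup_left.trans le_sup_right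
    have hrest : x ⊔ g k ⊔ t.sup (y ⊓ g ·) = x ⊔ y := by
      rw [ih (by rw [sup_right_comm, sup_eq_left.2 hk, h, sup_assoc]), sup_right_comm,
        sup_eq_left.2 hk]
    have hy : x ⊔ t.sup (y ⊓ g ·) ⊔ y = x ⊔ y := by
      rw [sup_assoc, sup_eq_right.2 (Finset.sup_le fun _ _ => inf_le_left)]
    rw [← sup_assoc, sup_right_comm, hα _ _ _ (by rw [hy, ← hrest, sup_right_comm]), hy]

lemma sup_finset_sup₂_inf_eq (hα : JoinSemidistrib α) {x : α} {s : Finset ι} {t : Finset κ}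
    {f : ι → α} {g : κ → α} (h : x ⊔ s.sup f = x ⊔ t.sup g) :
    x ⊔ s.sup (fun i => t.sup (f i ⊓ g ·)) = x ⊔ s.sup f := by
  induction s using Finset.cons_induction generalizing x with
  | empty => simp
  | cons i s _ ih =>
    simp only [Finset.sup_cons] at h ⊢
    have hi : f i ≤ x ⊔ t.sup g := h ▸ le_sup_left.trans le_sup_right
    set m := s.sup fun i => t.sup (f i ⊓ g ·)
    have hrest : x ⊔ m ⊔ f i = x ⊔ t.sup g := by
      rw [sup_right_comm, ih (by rw [sup_assoc, h, sup_right_comm, sup_eq_left.2 hi]),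
        sup_assoc, h]
    have hm : m ≤ t.sup g :=
      Finset.sup_le fun _ _ => Finset.sup_mono_fun fun _ _ => inf_le_right
    rw [← sup_assoc, sup_right_comm, h, ← hrest]
    exact hα.sup_finset_sup_inf_eq (by rw [hrest, sup_assoc, sup_eq_right.2 hm])

lemma sup_infs_eq [DecidableEq α] (hα : JoinSemidistrib α) {A B : Finset α}
    (h : A.sup id = B.sup id) : (A ⊼ B).sup id = A.sup id := by
  calc (A ⊼ B).sup id = A.sup fun a => B.sup (a ⊓ ·) := Finset.sup_image₂_left _ _ id
    _ = A.sup id := by simpa using hα.sup_finset_sup₂_inf_eq (x := ⊥) (congrArg (⊥ ⊔ ·) h)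

end JoinSemidistrib

section CanonicalJoinRep

open scoped FinsetFamily

variable {α : Type*} [Lattice α] [OrderBot α]

lemma exists_subset_irredJoinRep (B : Finset α) : ∃ A ⊆ B, IrredJoinRep A (B.sup id) := by
  obtain ⟨A, hAB, hA, hmin⟩ :=
    exists_minimal_le_of_wellFoundedLT (fun A : Finset α => A.sup id = B.sup id) B rfl
  refine ⟨A, hAB, hA, fun A' hA' => ?_⟩
  exact (hA ▸ Finset.sup_mono hA'.subset).lt_of_ne fun h => hA'.not_subset (hmin h hA'.subset)

lemma sup_finset_sup_erase [DecidableEq α] {A : Finset α} {a : α} (ha : a ∈ A) :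
    a ⊔ (A.erase a).sup id = A.sup id := by
  conv_rhs => rw [← Finset.insert_erase ha, Finset.sup_insert, id]

lemma IrredJoinRep.not_le_sup_erase [DecidableEq α] {A : Finset α} {w a : α}
    (hA : IrredJoinRep A w) (ha : a ∈ A) : ¬ a ≤ (A.erase a).sup id := fun hle =>
  (hA.2 _ (Finset.erase_ssubset ha)).ne <| by
    rw [← hA.1, ← sup_finset_sup_erase ha, sup_eq_right.2 hle]

lemma CanonicalJoinRep.joinRefines {A B : Finset α} {w : α} (hA : CanonicalJoinRep A w)
    (hB : B.sup id = w) : JoinRefines A B := by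
  obtain ⟨B', hB'B, hB'⟩ := exists_subset_irredJoinRep B
  intro a ha
  obtain ⟨b, hb, hab⟩ := hA.2 B' (hB ▸ hB') a ha
  exact ⟨b, hB'B hb, hab⟩

lemma JoinSemidistrib.exists_sup_eq_forall_joinRefines (hα : JoinSemidistrib α) {w : α}
    (𝓑 : Finset (Finset α)) (h𝓑 : ∀ B ∈ 𝓑, B.sup id = w) :
    ∃ A : Finset α, A.sup id = w ∧ ∀ B ∈ 𝓑, JoinRefines A B := by
  classical
  induction 𝓑 using Finset.cons_induction with
  | empty => exact ⟨{w}, by simp⟩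
  | cons B 𝓑 _ ih =>
    rw [Finset.forall_mem_cons] at h𝓑
    obtain ⟨A, hA, href⟩ := ih h𝓑.2
    refine ⟨A ⊼ B, (hα.sup_infs_eq (hA.trans h𝓑.1.symm)).trans hA, ?_⟩
    simp only [JoinRefines, Finset.forall_mem_cons, Finset.forall_infs_iff]
    refine ⟨fun a _ b hb => ⟨b, hb, inf_le_right⟩, fun C hC a ha b _ => ?_⟩
    obtain ⟨c, hc, hac⟩ := href C hC a ha
    exact ⟨c, hc, inf_le_left.trans hac⟩

theorem JoinSemidistrib.exists_canonicalJoinRep [Finite α] (hα : JoinSemidistrib α) (w : α) :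
    ∃ A, CanonicalJoinRep A w := by
  obtain ⟨A, hA, href⟩ := hα.exists_sup_eq_forall_joinRefines
    (Set.toFinite {B : Finset α | B.sup id = w}).toFinset (w := w) (by simp)
  obtain ⟨A', hA'A, hA'⟩ := exists_subset_irredJoinRep A
  exact ⟨A', hA ▸ hA', fun B hB a ha => href B (by simpa using hB.1) a (hA'A ha)⟩

end CanonicalJoinRep

section SupIio

variable {α : Type*} [Lattice α] [OrderBot α] [Finite α]

/-- The join of all elements strictly below `j`. For `j` join-irreducible this is the unique
element `j_*` covered by `j`; otherwise it is `j` itself. -/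
noncomputable def supIio (j : α) : α :=
  (Set.toFinite (Set.Iio j)).toFinset.sup id

lemma supIio_le_iff {j u : α} : supIio j ≤ u ↔ ∀ s < j, s ≤ u := by
  simp [supIio]

lemma le_supIio {s j : α} (h : s < j) : s ≤ supIio j :=
  supIio_le_iff.1 le_rfl s h

lemma supIio_le (j : α) : supIio j ≤ j :=
  supIio_le_iff.2 fun _ => le_of_lt

lemma joinIrred_iff_not_le_supIio {j : α} : JoinIrred j ↔ ¬ j ≤ supIio j := by
  constructor
  · rintro ⟨hbot, hirr⟩ hle
    have hlt : supIio j < j := by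
      refine Finset.sup_induction (p := (· < j)) (bot_lt_iff_ne_bot.2 hbot) ?_ (by simp)
      intro a ha b hb
      exact (sup_le ha.le hb.le).lt_of_ne fun h => (hirr a b h.symm).elim ha.ne' hb.ne'
    exact hlt.not_ge hle
  · refine fun hle => ⟨fun h => hle (h ▸ bot_le), fun a b hab => ?_⟩
    by_contra! hne
    have ha : a < j := (hab ▸ le_sup_left).lt_of_ne hne.1.symm
    have hb : b < j := (hab ▸ le_sup_right).lt_of_ne hne.2.symm
    exact hle (hab.le.trans (sup_le (le_supIio ha) (le_supIio hb)))

lemma meetSemidistrib_iff_supIio :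
    MeetSemidistrib α ↔
      ∀ j y z : α, supIio j ≤ y → supIio j ≤ z → j ≤ y ⊔ z → j ≤ y ∨ j ≤ z := by
  constructor
  · intro hα j y z hy hz hj
    by_contra! hne
    have inf_eq {u : α} (hu : supIio j ≤ u) (hju : ¬ j ≤ u) : j ⊓ u = supIio j :=
      (le_supIio (inf_lt_left.2 hju)).antisymm (le_inf (supIio_le j) hu)
    have h := hα j y z ((inf_eq hy hne.1).trans (inf_eq hz hne.2).symm)
    rw [inf_eq_left.2 hj] at h
    exact hne.1 (left_eq_inf.1 h)
  · intro h x y z hyz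
    refine le_antisymm ?_ (inf_le_inf_left x le_sup_left)
    by_contra hle
    obtain ⟨j, -, ⟨hj, hjxy⟩, hmin⟩ := exists_minimal_le_of_wellFoundedLT
      (fun s => s ≤ x ⊓ (y ⊔ z) ∧ ¬ s ≤ x ⊓ y) _ ⟨le_rfl, hle⟩
    obtain ⟨hjx, hjyz⟩ := le_inf_iff.1 hj
    have hstar : supIio j ≤ x ⊓ y := supIio_le_iff.2 fun s hs => by
      by_contra hsxy
      exact hs.not_ge (hmin ⟨hs.le.trans hj, hsxy⟩ hs.le)
    obtain hjy | hjz := h j y z (hstar.trans inf_le_right)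
      ((hstar.trans hyz.le).trans inf_le_right) hjyz
    · exact hjxy (le_inf hjx hjy)
    · exact hjxy (hyz ▸ le_inf hjx hjz)

lemma MeetSemidistrib.exists_le_supIio_sup (hα : MeetSemidistrib α) {j : α} {S : Finset α}
    (hj : ¬ j ≤ supIio j) (h : j ≤ supIio j ⊔ S.sup id) : ∃ k ∈ S, j ≤ supIio j ⊔ k := by
  by_contra! hS
  refine Finset.sup_induction (p := fun x => ¬ j ≤ supIio j ⊔ x) (by simpa using hj) ?_ hS h
  intro a ha b hb hab
  rw [sup_sup_distrib_left] at hab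
  exact (meetSemidistrib_iff_supIio.1 hα j _ _ le_sup_left le_sup_left hab).elim ha hb

end SupIio

section Flag

open scoped FinsetFamily

variable {α : Type*} [Lattice α] [OrderBot α] [Finite α]

lemma CanonicalJoinRep.le_of_le_supIio_sup {D : Finset α} {w d x : α}
    (hD : CanonicalJoinRep D w) (hd : d ∈ D) (hx : x ≤ w) (h : d ≤ supIio d ⊔ x) : d ≤ x := by
  classical
  have hDw : d ⊔ (D.erase d).sup id = w := (sup_finset_sup_erase hd).trans hD.1.1
  -- Replacing `d` in `D` by `x` and the `s < d` again gives a representation of `w`.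
  let R : Finset α := insert x ((Set.toFinite (Set.Iio d)).toFinset ∪ D.erase d)
  have hR : R.sup id = w :=
    calc R.sup id = x ⊔ (supIio d ⊔ (D.erase d).sup id) := by
          simp [R, Finset.sup_union, supIio]
      _ = supIio d ⊔ x ⊔ (D.erase d).sup id := by rw [sup_left_comm, sup_assoc]
      _ = w := by
        refine le_antisymm (sup_le (sup_le ?_ hx) ?_) (hDw.ge.trans (sup_le_sup_right h _))
        · exact (supIio_le d).trans (le_sup_left.trans hDw.le)
        · exact le_sup_right.trans hDw.le
  obtain ⟨r, hr, hdr⟩ := hD.joinRefines hR d hd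
  simp only [R, Finset.mem_insert, Finset.mem_union, Set.Finite.mem_toFinset, Set.mem_Iio] at hr
  obtain rfl | hrd | hrD := hr
  · exact hdr
  · exact absurd hdr hrd.not_ge
  · exact absurd (hdr.trans (Finset.le_sup (f := id) hrD)) (hD.1.not_le_sup_erase hd)

theorem JoinSemidistrib.joinsCanonically_iff_supIio [DecidableEq α] (hα : JoinSemidistrib α)
    {F : Finset α} :
    JoinsCanonically F ↔ ∀ j ∈ F, ¬ j ≤ supIio j ⊔ (F.erase j).sup id := by
  constructor
  · intro hF j hj hle
    exact hF.1.not_le_sup_erase hj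
      (hF.le_of_le_supIio_sup hj (Finset.sup_mono (F.erase_subset j)) hle)
  · refine fun h => ⟨⟨rfl, fun A hA => ?_⟩, fun B hB j hj => ?_⟩
    · obtain ⟨j, hj, hjA⟩ := Finset.exists_of_ssubset hA
      refine (Finset.sup_mono hA.subset).lt_of_ne fun hsup => h j hj ?_
      calc j ≤ A.sup id := hsup ▸ Finset.le_sup (f := id) hj
        _ ≤ (F.erase j).sup id := Finset.sup_mono (Finset.subset_erase.2 ⟨hA.subset, hjA⟩)
        _ ≤ _ := le_sup_right
    · by_contra! hjB
      refine h j hj ?_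
      calc j ≤ (F ⊼ B).sup id := hα.sup_infs_eq hB.1.symm ▸ Finset.le_sup (f := id) hj
        _ ≤ supIio j ⊔ (F.erase j).sup id := by
          refine Finset.sup_le (Finset.forall_infs_iff.2 fun k hk b hb => ?_)
          obtain rfl | hkj := eq_or_ne k j
          · exact (le_supIio (inf_lt_left.2 (hjB b hb))).trans le_sup_left
          · exact (inf_le_left.trans (Finset.le_sup (f := id)
              (Finset.mem_erase.2 ⟨hkj, hk⟩))).trans le_sup_right

lemma JoinSemidistrib.joinsCanonically_pair_iff [DecidableEq α] (hα : JoinSemidistrib α)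
    {j k : α} (hjk : j ≠ k) :
    JoinsCanonically {j, k} ↔ ¬ j ≤ supIio j ⊔ k ∧ ¬ k ≤ supIio k ⊔ j := by
  simp [hα.joinsCanonically_iff_supIio, Finset.erase_insert_of_ne, hjk]

lemma JoinsCanonically.subset (hα : JoinSemidistrib α) {F G : Finset α}
    (hF : JoinsCanonically F) (hGF : G ⊆ F) : JoinsCanonically G := by
  classical
  refine hα.joinsCanonically_iff_supIio.2 fun j hj hle =>
    hα.joinsCanonically_iff_supIio.1 hF j (hGF hj) ?_
  exact hle.trans (sup_le_sup_left (Finset.sup_mono (Finset.erase_subset_erase j hGF)) _)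

lemma JoinsCanonically.joinIrred (hα : JoinSemidistrib α) {F : Finset α}
    (hF : JoinsCanonically F) {j : α} (hj : j ∈ F) : JoinIrred j := by
  classical
  exact joinIrred_iff_not_le_supIio.2 fun hle =>
    hα.joinsCanonically_iff_supIio.1 hF j hj (hle.trans le_sup_left)

variable [DecidableEq α]

theorem JoinSemidistrib.flagCanonicalJoinComplex (hα : JoinSemidistrib α)
    (hmeet : MeetSemidistrib α) : FlagCanonicalJoinComplex α := by
  refine fun F hirr hpair => hα.joinsCanonically_iff_supIio.2 fun j hj hle => ?_
  obtain ⟨k, hk, hjk⟩ :=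
    hmeet.exists_le_supIio_sup (joinIrred_iff_not_le_supIio.1 (hirr j hj)) hle
  obtain ⟨hkj, hkF⟩ := Finset.mem_erase.1 hk
  exact ((hα.joinsCanonically_pair_iff hkj.symm).1 (hpair j hj k hkF hkj.symm)).1 hjk

lemma FlagCanonicalJoinComplex.joinsCanonically_insert (hα : JoinSemidistrib α)
    (hflag : FlagCanonicalJoinComplex α) {E : Finset α} {j : α} (hE : JoinsCanonically E)
    (hj : JoinIrred j) (hpair : ∀ d ∈ E, j ≠ d → JoinsCanonically {j, d}) :
    JoinsCanonically (insert j E) := by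
  refine hflag _ ?_ fun k hk l hl hkl => ?_
  · exact (Finset.forall_mem_insert _ _ _).2 ⟨hj, fun d => hE.joinIrred hα⟩
  · obtain rfl | hkE := Finset.mem_insert.1 hk
    · exact hpair l (Finset.mem_of_mem_insert_of_ne hl hkl.symm) hkl
    obtain rfl | hlE := Finset.mem_insert.1 hl
    · rw [Finset.pair_comm]
      exact hpair k hkE hkl.symm
    · exact hE.subset hα (Finset.insert_subset hkE (Finset.singleton_subset_iff.2 hlE))

theorem FlagCanonicalJoinComplex.meetSemidistrib (hα : JoinSemidistrib α)
    (hflag : FlagCanonicalJoinComplex α) : MeetSemidistrib α := by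
  refine meetSemidistrib_iff_supIio.2 fun j y z hy hz hjw => ?_
  by_contra! hne
  obtain ⟨D, hD⟩ := hα.exists_canonicalJoinRep (y ⊔ z)
  have not_le_sup : ∀ d ∈ D, ¬ j ≤ supIio j ⊔ d := by
    intro d hd hle
    obtain ⟨b, hb, hdb⟩ := hD.joinRefines (B := {y, z}) (by simp) d hd
    obtain rfl | rfl : b = y ∨ b = z := by simpa using hb
    · exact hne.1 (hle.trans (sup_le hy hdb))
    · exact hne.2 (hle.trans (sup_le hz hdb))
  classical
  let E := D.filter (¬ · ≤ j)
  have hDface : JoinsCanonically D := by rwa [JoinsCanonically, hD.1.1]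
  have hE : JoinsCanonically E := hDface.subset hα (Finset.filter_subset _ _)
  have hG : JoinsCanonically (insert j E) := by
    refine hflag.joinsCanonically_insert hα hE ?_ fun d hd hjd => ?_
    · exact joinIrred_iff_not_le_supIio.2 fun hle => hne.1 (hle.trans hy)
    · obtain ⟨hdD, hdj⟩ := Finset.mem_filter.1 hd
      exact (hα.joinsCanonically_pair_iff hjd).2
        ⟨not_le_sup d hdD, fun hle => hdj (hD.le_of_le_supIio_sup hdD hjw hle)⟩
  refine hα.joinsCanonically_iff_supIio.1 hG j (Finset.mem_insert_self j E) (hjw.trans ?_)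
  rw [← hD.1.1, Finset.erase_insert (by simp [E])]
  refine Finset.sup_le fun d hd => ?_
  by_cases hdj : d ≤ j
  · have hlt : d < j := hdj.lt_of_ne fun h => not_le_sup d hd (h ▸ le_sup_right)
    exact (le_supIio hlt).trans le_sup_left
  · exact (Finset.le_sup (f := id) (Finset.mem_filter.2 ⟨hd, hdj⟩)).trans le_sup_right

end Flag

/-- Theorem 1 (flag): a finite join-semidistributive lattice has flag canonical join complex
iff it is semidistributive. -/
theorem stmt_0 {α : Type*} [Lattice α] [OrderBot α] [Fintype α] [DecidableEq α]
    (hjsd : JoinSemidistrib α) :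
    FlagCanonicalJoinComplex α ↔ (JoinSemidistrib α ∧ MeetSemidistrib α) :=
  ⟨fun hflag => ⟨hjsd, hflag.meetSemidistrib hjsd⟩,
    fun h => hjsd.flagCanonicalJoinComplex h.2⟩
end

section
/- Let L be a finite join-semidistributive lattice that is not meet-semidistributive. Then there exist an element a ∈ L and pairwise distinct elements x, y, z ∈ L, each covering a, such that x < y ∨ z. -/
universe u v

/-! Call a cover `x` of `a` join-prime above `a` if `x ≤ y ⊔ z` with `y, z ≥ a` forces `x ≤ y` or
`x ≤ z`. A failure of meet-semidistributivity, `x ⊓ y = x ⊓ z < x ⊓ (y ⊔ z)`, yields a cover of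
`x ⊓ y` which is not join-prime, so it suffices to prove that covers are join-prime when no cover
of an element lies below the join of two other covers. This goes by induction from above.
Given `a ⋖ x ≤ y ⊔ z`, choose covers `y₁ ≤ y` and `z₁ ≤ z` of `a`. If `y₁ ≤ c ⋖ x ⊔ y₁`, then
`x ⊔ y₁` is join-prime above `c` by induction, and join-semidistributivity brings this down to `x`:
whenever `x ≤ p ⊔ q` with `p, q ≥ y₁`, already `x ≤ p` or `x ≤ q`. The same holds for `z₁`. Applied
to `x ≤ y ⊔ (y₁ ⊔ z)` and then, with `z₁`, to `x ≤ z ⊔ (y₁ ⊔ z₁)`, this leaves only the case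
`x ≤ y₁ ⊔ z₁`, in which `x`, `y₁`, `z₁` are covers of `a`. -/

section Covers

variable {α : Type*}

theorem eq_of_lt_of_covBy_of_le [PartialOrder α] {a x y : α} (hx : a < x) (hy : a ⋖ y)
    (hxy : x ≤ y) : x = y :=
  hxy.eq_of_not_lt (hy.2 hx)

theorem inf_eq_of_covBy_of_not_le [SemilatticeInf α] {a x y : α} (hx : a ⋖ x) (hy : a ≤ y)
    (hxy : ¬x ≤ y) : x ⊓ y = a :=
  (hx.eq_or_eq (le_inf hx.le hy) inf_le_left).resolve_right (inf_eq_left.not.mpr hxy)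

end Covers

section Semidistributivity

variable {α : Type*} [Lattice α]

theorem JoinSemidistrib.le_of_sup_eq_sup_of_inf_le (hjsd : JoinSemidistrib α) {p x c : α}
    (hsup : p ⊔ x = p ⊔ c) (hinf : x ⊓ c ≤ p) : x ≤ p := by
  have hp : p = p ⊔ x := by simpa only [sup_eq_left.mpr hinf] using hjsd p x c hsup
  exact sup_eq_left.mp hp.symm

/-- Every cover of `a` is join-prime in the principal filter of elements `≥ a`. This is
meet-semidistributivity localised at `a`, stated by inequalities in the ambient lattice rather
than through `SupPrime` on `Set.Ici a`. -/
def CoversSupPrimeAt (a : α) : Prop :=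
  ∀ ⦃x y z : α⦄, a ⋖ x → a ≤ y → a ≤ z → x ≤ y ⊔ z → x ≤ y ∨ x ≤ z

/-- No cover of `a` lies below the join of two covers of `a` different from it. This is the
special case of `CoversSupPrimeAt a` in which `y` and `z` are covers too; `y = z` is allowed. -/
def CoversTripleIndepAt (a : α) : Prop :=
  ∀ ⦃x y z : α⦄, a ⋖ x → a ⋖ y → a ⋖ z → x ≤ y ⊔ z → x = y ∨ x = z

theorem MeetSemidistrib.of_forall_coversSupPrimeAt [IsStronglyAtomic α]
    (hprime : ∀ a : α, CoversSupPrimeAt a) : MeetSemidistrib α := by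
  intro x y z hyz
  by_contra hne
  have hlt : x ⊓ y < x ⊓ (y ⊔ z) := (inf_le_inf_left x le_sup_left).lt_of_ne' hne
  obtain ⟨t, hat, ht⟩ := exists_covBy_le_of_lt hlt
  have htx : t ≤ x := ht.trans inf_le_left
  rcases hprime _ hat inf_le_right (hyz.trans_le inf_le_right) (ht.trans inf_le_right) with
    hty | htz
  · exact hat.lt.not_ge (le_inf htx hty)
  · exact hat.lt.not_ge ((le_inf htx htz).trans_eq hyz.symm)

theorem exists_covBy_lt_sup_of_not_coversTripleIndepAt {a : α} (h : ¬CoversTripleIndepAt a) :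
    ∃ x y z : α, a ⋖ x ∧ a ⋖ y ∧ a ⋖ z ∧ x ≠ y ∧ x ≠ z ∧ y ≠ z ∧ x < y ⊔ z := by
  simp only [CoversTripleIndepAt, not_forall, not_or] at h
  obtain ⟨x, y, z, hx, hy, hz, hle, hxy, hxz⟩ := h
  refine ⟨x, y, z, hx, hy, hz, hxy, hxz, ?_, hle.lt_of_ne ?_⟩
  · rintro rfl
    exact hxy (eq_of_lt_of_covBy_of_le hx.lt hy (hle.trans_eq (sup_idem y)))
  · intro hx_eq
    exact hxy (eq_of_lt_of_covBy_of_le hy.lt hx (le_sup_left.trans_eq hx_eq.symm)).symm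

namespace JoinSemidistrib

theorem le_of_covBy_sup_of_le_sup (hjsd : JoinSemidistrib α) {a x w c p : α} (hx : a ⋖ x)
    (haw : a ≤ w) (hwc : w ≤ c) (hc : c ⋖ x ⊔ w) (hwp : w ≤ p) (hxp : x ≤ p ⊔ c) : x ≤ p := by
  have hxc : ¬x ≤ c := fun h ↦ hc.lt.not_ge (sup_le h hwc)
  have hinf : x ⊓ c = a := inf_eq_of_covBy_of_not_le hx (haw.trans hwc) hxc
  have hcp : c ≤ p ⊔ x := hc.le.trans (sup_le le_sup_right (hwp.trans le_sup_left))
  have hsup : p ⊔ x = p ⊔ c :=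
    le_antisymm (sup_le le_sup_left hxp) (sup_le le_sup_left hcp)
  exact hjsd.le_of_sup_eq_sup_of_inf_le hsup (hinf.trans_le (haw.trans hwp))

theorem le_or_le_of_le_sup [IsStronglyCoatomic α] (hjsd : JoinSemidistrib α) {a x w p q : α}
    (hprime : ∀ b ≥ w, CoversSupPrimeAt b) (hx : a ⋖ x) (haw : a ≤ w) (hwp : w ≤ p) (hwq : w ≤ q)
    (hxpq : x ≤ p ⊔ q) : x ≤ p ∨ x ≤ q := by
  by_cases hxw : x ≤ w
  · exact .inl (hxw.trans hwp)
  obtain ⟨c, hwc, hc⟩ := exists_le_covBy_of_lt (right_lt_sup.mpr hxw)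
  have hle : x ⊔ w ≤ (p ⊔ c) ⊔ (q ⊔ c) :=
    (sup_le hxpq (hwp.trans le_sup_left)).trans (sup_le_sup le_sup_left le_sup_left)
  refine (hprime c hwc hc le_sup_right le_sup_right hle).imp (fun h ↦ ?_) (fun h ↦ ?_)
  · exact hjsd.le_of_covBy_sup_of_le_sup hx haw hwc hc hwp (le_sup_left.trans h)
  · exact hjsd.le_of_covBy_sup_of_le_sup hx haw hwc hc hwq (le_sup_left.trans h)

theorem coversSupPrimeAt_of_forall_gt [IsStronglyAtomic α] [IsStronglyCoatomic α]
    (hjsd : JoinSemidistrib α) {a : α} (hindep : CoversTripleIndepAt a)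
    (hprime : ∀ b > a, CoversSupPrimeAt b) : CoversSupPrimeAt a := by
  intro x y z hx hay haz hxyz
  rcases hay.eq_or_lt with rfl | hay
  · exact .inr (hxyz.trans_eq (sup_eq_right.mpr haz))
  rcases haz.eq_or_lt with rfl | haz
  · exact .inl (hxyz.trans_eq (sup_eq_left.mpr hay.le))
  obtain ⟨y₁, hy₁, hy₁y⟩ := exists_covBy_le_of_lt hay
  obtain ⟨z₁, hz₁, hz₁z⟩ := exists_covBy_le_of_lt haz
  have hy_or : x ≤ y ∨ x ≤ y₁ ⊔ z :=
    hjsd.le_or_le_of_le_sup (fun b hb ↦ hprime b (hy₁.lt.trans_le hb)) hx hy₁.le hy₁y le_sup_left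
      (hxyz.trans (sup_le_sup_left le_sup_right y))
  have hz_or (h : x ≤ y₁ ⊔ z) : x ≤ z ∨ x ≤ y₁ ⊔ z₁ :=
    hjsd.le_or_le_of_le_sup (fun b hb ↦ hprime b (hz₁.lt.trans_le hb)) hx hz₁.le hz₁z le_sup_right
      (h.trans (sup_le (le_sup_left.trans le_sup_right) le_sup_left))
  rcases hy_or with hxy | hxy₁z
  · exact .inl hxy
  rcases hz_or hxy₁z with hxz | hxy₁z₁
  · exact .inr hxz
  exact (hindep hx hy₁ hz₁ hxy₁z₁).imp (fun h ↦ h.trans_le hy₁y) (fun h ↦ h.trans_le hz₁z)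

theorem meetSemidistrib_of_forall_coversTripleIndepAt [IsStronglyAtomic α] [WellFoundedGT α]
    (hjsd : JoinSemidistrib α) (hindep : ∀ a : α, CoversTripleIndepAt a) : MeetSemidistrib α :=
  .of_forall_coversSupPrimeAt fun a ↦
    WellFoundedGT.induction a fun b ih ↦ hjsd.coversSupPrimeAt_of_forall_gt (hindep b) ih

end JoinSemidistrib

end Semidistributivity

theorem stmt_15_general {α : Type*} [Lattice α] [IsStronglyAtomic α] [WellFoundedGT α]
    (hjsd : JoinSemidistrib α) (hmsd : ¬MeetSemidistrib α) :
    ∃ a x y z : α, a ⋖ x ∧ a ⋖ y ∧ a ⋖ z ∧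
      x ≠ y ∧ x ≠ z ∧ y ≠ z ∧ x < y ⊔ z := by
  have hdep : ∃ a : α, ¬CoversTripleIndepAt a :=
    not_forall.mp fun h ↦ hmsd (hjsd.meetSemidistrib_of_forall_coversTripleIndepAt h)
  obtain ⟨a, ha⟩ := hdep
  exact ⟨a, exists_covBy_lt_sup_of_not_coversTripleIndepAt ha⟩

/-- Lemma (crosscut lemma): a finite join-semidistributive lattice that is not
meet-semidistributive contains three distinct covers `x, y, z` of a common element `a`
with `x < y ⊔ z`. -/
theorem stmt_15 {α : Type*} [Lattice α] [Fintype α]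
    (hjsd : JoinSemidistrib α) (hmsd : ¬ MeetSemidistrib α) :
    ∃ a x y z : α, a ⋖ x ∧ a ⋖ y ∧ a ⋖ z ∧
      x ≠ y ∧ x ≠ z ∧ y ≠ z ∧ x < y ⊔ z :=
  stmt_15_general hjsd hmsd
end
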